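/- Let k be an algebraically closed field of characteristic 0. Every homogeneous polynomial f ∈ k[x,y] of degree 4 is GL₂(k)-equivalent to one of the following: (1) 0; (2) x⁴; (3) x³y; (4) x²y²; (5) x⁴ + x²y²; (6) x⁴ + y⁴ + λx²y² for some λ ∈ k with λ ≠ 2 and λ ≠ −2. -/

import Mathlib

open MvPolynomial

/-- `GL₂(k)`-equivalence of polynomials in `k[x,y]`: `f ∼ g` iff `g = σ(f)` for some
`σ = ((α,β),(γ,δ)) ∈ GL₂(k)` acting by `x ↦ αx + βy`, `y ↦ γx + δy`. -/
def glEquiv (k : Type*) [CommRing k] (f g : MvPolynomial (Fin 2) k) : Prop :=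
  ∃ α β γ δ : k, α * δ - β * γ ≠ 0 ∧
    (MvPolynomial.aeval
      ![C α * X 0 + C β * X 1, C γ * X 0 + C δ * X 1] : _ →ₐ[k] _) f = g

/-- The general binary quartic. -/
noncomputable def binQ {k : Type*} [CommRing k] (a b c d e : k) : MvPolynomial (Fin 2) k :=
  C a * X 0 ^ 4 + C b * (X 0 ^ 3 * X 1) + C c * (X 0 ^ 2 * X 1 ^ 2) + C d * (X 0 * X 1 ^ 3)
    + C e * X 1 ^ 4

/-- The disjunction in the theorem. -/
def GoodQ (k : Type*) [Field k] (f : MvPolynomial (Fin 2) k) : Prop :=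
    glEquiv k f 0 ∨
    glEquiv k f (X 0 ^ 4) ∨
    glEquiv k f (X 0 ^ 3 * X 1) ∨
    glEquiv k f (X 0 ^ 2 * X 1 ^ 2) ∨
    glEquiv k f (X 0 ^ 4 + X 0 ^ 2 * X 1 ^ 2) ∨
    ∃ l : k, l ≠ 2 ∧ l ≠ -2 ∧
      glEquiv k f (X 0 ^ 4 + X 1 ^ 4 + C l * X 0 ^ 2 * X 1 ^ 2)

lemma glEquiv_refl' {k : Type*} [Field k] (f : MvPolynomial (Fin 2) k) : glEquiv k f f := by
  refine ⟨1, 0, 0, 1, by simp, ?_⟩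
  have : (![C 1 * X 0 + C 0 * X 1, C 0 * X 0 + C 1 * X 1] : Fin 2 → MvPolynomial (Fin 2) k) = X := by
    funext i; fin_cases i <;> simp
  rw [this]; simp

lemma glEquiv_trans' {k : Type*} [Field k] {f g h : MvPolynomial (Fin 2) k}
    (h1 : glEquiv k f g) (h2 : glEquiv k g h) : glEquiv k f h := by
  obtain ⟨α, β, γ, δ, hd, rfl⟩ := h1
  obtain ⟨α', β', γ', δ', hd', rfl⟩ := h2
  refine ⟨α * α' + β * γ', α * β' + β * δ', γ * α' + δ * γ', γ * β' + δ * δ', ?_, ?_⟩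
  · have := mul_ne_zero hd hd'
    intro h; apply this; linear_combination h
  · rw [← AlgHom.comp_apply]
    congr 1
    apply MvPolynomial.algHom_ext
    intro i
    fin_cases i <;> simp [algHom_C, algebraMap_eq] <;> ring

lemma GoodQ.of_equiv {k : Type*} [Field k] {f g : MvPolynomial (Fin 2) k}
    (h : glEquiv k f g) (hg : GoodQ k g) : GoodQ k f := by
  rcases hg with h1 | h1 | h1 | h1 | h1 | ⟨l, h2, h3, h1⟩
  · exact Or.inl (glEquiv_trans' h h1)
  · exact Or.inr (Or.inl (glEquiv_trans' h h1))
  · exact Or.inr (Or.inr (Or.inl (glEquiv_trans' h h1)))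
  · exact Or.inr (Or.inr (Or.inr (Or.inl (glEquiv_trans' h h1))))
  · exact Or.inr (Or.inr (Or.inr (Or.inr (Or.inl (glEquiv_trans' h h1)))))
  · exact Or.inr (Or.inr (Or.inr (Or.inr (Or.inr ⟨l, h2, h3, glEquiv_trans' h h1⟩))))

lemma GoodQ.sub {k : Type*} [Field k] {a b c d e : k} (α β γ δ : k) {a' b' c' d' e' : k}
    (hg : GoodQ k (binQ a' b' c' d' e')) (hd : α * δ - β * γ ≠ 0)
    (ha : a * α ^ 4 + b * α ^ 3 * γ + c * α ^ 2 * γ ^ 2 + d * α * γ ^ 3 + e * γ ^ 4 = a')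
    (hb : 4 * a * α ^ 3 * β + b * (α ^ 3 * δ + 3 * α ^ 2 * β * γ)
      + c * (2 * α ^ 2 * γ * δ + 2 * α * β * γ ^ 2) + d * (3 * α * γ ^ 2 * δ + β * γ ^ 3)
      + 4 * e * γ ^ 3 * δ = b')
    (hc : 6 * a * α ^ 2 * β ^ 2 + b * (3 * α ^ 2 * β * δ + 3 * α * β ^ 2 * γ)
      + c * (α ^ 2 * δ ^ 2 + 4 * α * β * γ * δ + β ^ 2 * γ ^ 2)
      + d * (3 * α * γ * δ ^ 2 + 3 * β * γ ^ 2 * δ) + 6 * e * γ ^ 2 * δ ^ 2 = c')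
    (hd' : 4 * a * α * β ^ 3 + b * (β ^ 3 * γ + 3 * α * β ^ 2 * δ)
      + c * (2 * α * β * δ ^ 2 + 2 * β ^ 2 * γ * δ) + d * (α * δ ^ 3 + 3 * β * γ * δ ^ 2)
      + 4 * e * γ * δ ^ 3 = d')
    (he : a * β ^ 4 + b * β ^ 3 * δ + c * β ^ 2 * δ ^ 2 + d * β * δ ^ 3 + e * δ ^ 4 = e') :
    GoodQ k (binQ a b c d e) := by
  refine GoodQ.of_equiv ⟨α, β, γ, δ, hd, ?_⟩ hg
  subst ha hb hc hd' he
  simp [binQ, algHom_C, algebraMap_eq]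
  have h2 : (C 2 : MvPolynomial (Fin 2) k) = 2 := map_ofNat C 2
  have h3 : (C 3 : MvPolynomial (Fin 2) k) = 3 := map_ofNat C 3
  have h4 : (C 4 : MvPolynomial (Fin 2) k) = 4 := map_ofNat C 4
  have h6 : (C 6 : MvPolynomial (Fin 2) k) = 6 := map_ofNat C 6
  try simp only [h2, h3, h4, h6]
  ring

lemma exists_binQ {k : Type*} [Field k] (f : MvPolynomial (Fin 2) k) (hf : f.IsHomogeneous 4) :
    ∃ a b c d e : k, f = binQ a b c d e := by
  rw [f.as_sum]
  refine Finset.sum_induction _ (fun p => ∃ a b c d e : k, p = binQ a b c d e) ?_ ?_ ?_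
  · rintro _ _ ⟨a, b, c, d, e, rfl⟩ ⟨a', b', c', d', e', rfl⟩
    refine ⟨a + a', b + b', c + c', d + d', e + e', ?_⟩
    simp only [binQ, map_add]; ring
  · exact ⟨0, 0, 0, 0, 0, by simp [binQ]⟩
  · intro m hm
    have h4 := hf (mem_support_iff.mp hm)
    have hs : m 0 + m 1 = 4 := by
      rw [← h4, Finsupp.weight_apply, Finsupp.sum_fintype _ _ (by simp)]
      simp [Fin.sum_univ_two]
    have hmon : monomial m (coeff m f) = C (coeff m f) * (X 0 ^ m 0 * X 1 ^ m 1) := by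
      rw [monomial_eq, Finsupp.prod_fintype _ _ (by simp)]
      simp [Fin.prod_univ_two]
    rw [hmon]
    generalize coeff m f = r
    have h0 : m 0 ≤ 4 := by omega
    have h1 : m 1 = 4 - m 0 := by omega
    rw [h1]
    generalize m 0 = i at h0
    interval_cases i
    · exact ⟨0, 0, 0, 0, r, by simp [binQ]⟩
    · exact ⟨0, 0, 0, r, 0, by simp [binQ]⟩
    · exact ⟨0, 0, r, 0, 0, by simp [binQ]⟩
    · exact ⟨0, r, 0, 0, 0, by simp [binQ]⟩
    · exact ⟨r, 0, 0, 0, 0, by simp [binQ]⟩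

section
variable {k : Type*} [Field k]

lemma good_zero : GoodQ k (binQ 0 0 0 0 0) := by
  left; convert glEquiv_refl' (0 : MvPolynomial (Fin 2) k); simp [binQ]

lemma good_x4 : GoodQ k (binQ 1 0 0 0 0) := by
  right; left; convert glEquiv_refl' (X 0 ^ 4 : MvPolynomial (Fin 2) k); simp [binQ]

lemma good_x3y : GoodQ k (binQ 0 1 0 0 0) := by
  right; right; left
  convert glEquiv_refl' (X 0 ^ 3 * X 1 : MvPolynomial (Fin 2) k); simp [binQ]

lemma good_x2y2 : GoodQ k (binQ 0 0 1 0 0) := by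
  right; right; right; left
  convert glEquiv_refl' (X 0 ^ 2 * X 1 ^ 2 : MvPolynomial (Fin 2) k); simp [binQ]

lemma good_x4x2y2 : GoodQ k (binQ 1 0 1 0 0) := by
  right; right; right; right; left
  convert glEquiv_refl' (X 0 ^ 4 + X 0 ^ 2 * X 1 ^ 2 : MvPolynomial (Fin 2) k); simp [binQ]

lemma good_gen (l : k) (h : l ≠ 2) (h' : l ≠ -2) : GoodQ k (binQ 1 0 l 0 1) := by
  right; right; right; right; right
  refine ⟨l, h, h', ?_⟩
  convert glEquiv_refl' (X 0 ^ 4 + X 1 ^ 4 + C l * X 0 ^ 2 * X 1 ^ 2 : MvPolynomial (Fin 2) k)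
  simp [binQ]; ring

lemma good_scale {a b c d e : k} (s t : k) (hs : s ≠ 0) (ht : t ≠ 0)
    (h : GoodQ k (binQ (a * s ^ 4) (b * s ^ 3 * t) (c * s ^ 2 * t ^ 2) (d * s * t ^ 3)
      (e * t ^ 4))) : GoodQ k (binQ a b c d e) :=
  GoodQ.sub s 0 0 t h (by simp [hs, ht]) (by ring) (by ring) (by ring) (by ring) (by ring)

lemma good_swap {a b c d e : k} (h : GoodQ k (binQ e d c b a)) : GoodQ k (binQ a b c d e) :=
  GoodQ.sub 0 1 1 0 h (by simp) (by ring) (by ring) (by ring) (by ring) (by ring)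

variable [IsAlgClosed k] [CharZero k]

lemma exists_inv_pow (a : k) (ha : a ≠ 0) (n : ℕ) (hn : 0 < n) : ∃ s : k, s ≠ 0 ∧ a * s ^ n = 1 := by
  obtain ⟨s, hs⟩ := IsAlgClosed.exists_pow_nat_eq a⁻¹ hn
  refine ⟨s, ?_, by rw [hs]; exact mul_inv_cancel₀ ha⟩
  rintro rfl
  rw [zero_pow hn.ne'] at hs
  exact inv_ne_zero ha hs.symm

lemma good_double (a b c : k) : GoodQ k (binQ a b c 0 0) := by
  by_cases hc : c = 0
  · subst hc
    by_cases hb : b = 0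
    · subst hb
      by_cases ha : a = 0
      · subst ha; exact good_zero
      · obtain ⟨s, hs, h⟩ := exists_inv_pow a ha 4 (by norm_num)
        refine good_scale s 1 hs one_ne_zero ?_
        convert good_x4 (k := k) using 2 <;> simp [h]
    · refine GoodQ.sub 1 0 (-a / b) (1 / b) good_x3y (by simp [hb]) ?_ ?_ ?_ ?_ ?_ <;>
        field_simp <;> ring
  · have key : GoodQ k (binQ (a - b ^ 2 / (4 * c)) 0 c 0 0) := by
      generalize a - b ^ 2 / (4 * c) = D
      by_cases hD : D = 0
      · subst hD
        obtain ⟨t, ht, h⟩ := exists_inv_pow c hc 2 (by norm_num)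
        refine good_scale 1 t one_ne_zero ht ?_
        convert good_x2y2 (k := k) using 2 <;> simp [h]
      · obtain ⟨s, hs, h⟩ := exists_inv_pow D hD 4 (by norm_num)
        obtain ⟨t, ht, h'⟩ := exists_inv_pow (c * s ^ 2) (by simp [hc, hs]) 2 (by norm_num)
        refine good_scale s t hs ht ?_
        convert good_x4x2y2 (k := k) using 2 <;> simp [h, h']
    refine GoodQ.sub 1 0 (-b / (2 * c)) 1 key (by simp) ?_ ?_ ?_ ?_ ?_ <;>
        field_simp <;> ring

lemma good_even (a c e : k) : GoodQ k (binQ a 0 c 0 e) := by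
  by_cases he : e = 0
  · subst he; exact good_double _ _ _
  by_cases ha : a = 0
  · subst ha; exact good_swap (good_double _ _ _)
  obtain ⟨s, hs, h⟩ := exists_inv_pow a ha 4 (by norm_num)
  obtain ⟨t, ht, h'⟩ := exists_inv_pow e he 4 (by norm_num)
  refine good_scale s t hs ht ?_
  simp only [h, h', zero_mul]
  generalize c * s ^ 2 * t ^ 2 = l
  have h2 : (2 : k) ≠ 0 := two_ne_zero
  by_cases hl : l = 2
  · subst hl
    obtain ⟨i, hi⟩ := IsAlgClosed.exists_pow_nat_eq (-1 : k) (n := 2) (by norm_num)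
    have hi0 : i ≠ 0 := by rintro rfl; simp at hi
    refine GoodQ.sub 1 1 i (-i) (good_double 0 0 16) ?_ ?_ ?_ ?_ ?_ ?_
    · have := mul_ne_zero h2 hi0
      intro h; apply this; linear_combination -h
    · linear_combination (i ^ 2 + 1) * hi
    · linear_combination (-4 * (i ^ 2 - 1)) * hi
    · linear_combination (6 * i ^ 2 - 10) * hi
    · linear_combination (-4 * (i ^ 2 - 1)) * hi
    · linear_combination (i ^ 2 + 1) * hi
  by_cases hl' : l = -2
  · subst hl'
    refine GoodQ.sub 1 1 1 (-1) (good_double 0 0 16) ?_ ?_ ?_ ?_ ?_ ?_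
    · intro h; apply h2; linear_combination -h
    all_goals ring
  exact good_gen l hl hl'

lemma good_xy (b c d : k) : GoodQ k (binQ 0 b c d 0) := by
  by_cases hd : d = 0
  · subst hd; exact good_double _ _ _
  by_cases hb : b = 0
  · subst hb; exact good_swap (good_double _ _ _)
  obtain ⟨s, hs⟩ := IsAlgClosed.exists_pow_nat_eq (d / b) (n := 2) (by norm_num)
  have hs0 : s ≠ 0 := by
    rintro rfl
    rw [zero_pow two_ne_zero] at hs
    exact div_ne_zero hd hb hs.symm
  have hs' : b * s ^ 2 = d := by rw [hs]; field_simp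
  refine GoodQ.sub s s 1 (-1) (good_even (2 * d * s + c * s ^ 2) (-2 * c * s ^ 2)
    (-2 * d * s + c * s ^ 2)) ?_ ?_ ?_ ?_ ?_ ?_
  · have := mul_ne_zero (two_ne_zero (α := k)) hs0
    intro h; apply this; linear_combination -h
  · linear_combination s * hs'
  · linear_combination 2 * s * hs'
  · ring
  · linear_combination (-2) * s * hs'
  · linear_combination (-s) * hs'

lemma good_y (b c d e : k) : GoodQ k (binQ 0 b c d e) := by
  by_cases hb : b = 0
  · subst hb; exact good_swap (good_double _ _ _)
  obtain ⟨t, ht⟩ := IsAlgClosed.exists_root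
    (Polynomial.C b * Polynomial.X ^ 3 + Polynomial.C c * Polynomial.X ^ 2
      + Polynomial.C d * Polynomial.X + Polynomial.C e)
    (by rw [Polynomial.degree_cubic hb]; norm_num)
  simp [Polynomial.IsRoot] at ht
  refine GoodQ.sub 1 t 0 1 (good_xy b (3 * b * t + c) (3 * b * t ^ 2 + 2 * c * t + d))
    (by simp) ?_ ?_ ?_ ?_ ?_
  · ring
  · ring
  · ring
  · ring
  · linear_combination ht

lemma good_all (a b c d e : k) : GoodQ k (binQ a b c d e) := by
  by_cases ha : a = 0
  · subst ha; exact good_y _ _ _ _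
  obtain ⟨t, ht⟩ := IsAlgClosed.exists_root
    (Polynomial.C a * Polynomial.X ^ 4 + (Polynomial.C b * Polynomial.X ^ 3
      + Polynomial.C c * Polynomial.X ^ 2 + Polynomial.C d * Polynomial.X + Polynomial.C e))
    (by
      rw [Polynomial.degree_add_eq_left_of_degree_lt]
      · rw [Polynomial.degree_C_mul_X_pow 4 ha]; norm_num
      · rw [Polynomial.degree_C_mul_X_pow 4 ha]
        exact lt_of_le_of_lt Polynomial.degree_cubic_le (by norm_num))
  simp [Polynomial.IsRoot] at ht
  refine GoodQ.sub t 1 1 0 (good_y _ _ _ _) (by simp) ?_ rfl rfl rfl rfl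
  linear_combination ht

end




/-- over an algebraically closed field of characteristic 0, every
binary quartic form is `GL₂(k)`-equivalent to `0`, `x⁴`, `x³y`, `x²y²`,
`x⁴ + x²y²`, or `x⁴ + y⁴ + λx²y²` with `λ ≠ ±2`. -/
theorem statement7 (k : Type*) [Field k] [IsAlgClosed k] [CharZero k]
    (f : MvPolynomial (Fin 2) k) (hf : f.IsHomogeneous 4) :
    glEquiv k f 0 ∨
    glEquiv k f (X 0 ^ 4) ∨
    glEquiv k f (X 0 ^ 3 * X 1) ∨
    glEquiv k f (X 0 ^ 2 * X 1 ^ 2) ∨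
    glEquiv k f (X 0 ^ 4 + X 0 ^ 2 * X 1 ^ 2) ∨
    ∃ l : k, l ≠ 2 ∧ l ≠ -2 ∧
      glEquiv k f (X 0 ^ 4 + X 1 ^ 4 + C l * X 0 ^ 2 * X 1 ^ 2) := by
  obtain ⟨a, b, c, d, e, rfl⟩ := exists_binQ f hf
  exact good_all a b c d e
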